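/- (Monotonicity of the discrete operator.) For an interior index i and Δt > 0, define G_i(u₋, u₀, u₊, ū) = (u₀ − ū)/Δt − max_{σ∈{σ̲,σ̄}} [ α_i(σ) u₋ + β_i(σ) u₊ − (α_i(σ)+β_i(σ)+r) u₀ ]. Then for every ε ≥ 0 and all real u₋, u₀, u₊, ū: G_i(u₋+ε, u₀, u₊, ū) ≤ G_i(u₋, u₀, u₊, ū), G_i(u₋, u₀, u₊+ε, ū) ≤ G_i(u₋, u₀, u₊, ū), and G_i(u₋, u₀, u₊, ū+ε) = G_i(u₋, u₀, u₊, ū) − ε/Δt ≤ G_i(u₋, u₀, u₊, ū). -/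

import Mathlib

/-!
On an increasing grid the weights `α_i(σ)` and `β_i(σ)` are nonnegative, so for each `σ` the bracket
is nondecreasing in `u₋` and `u₊`; so is the maximum over `σ ∈ {σ̲, σ̄}`, which enters `G_i` with a
minus sign. The dependence on `ū` is affine with slope `-1/Δt < 0`.
-/

/-- `α_i(σ) = σ²x_i²/((x_i − x_{i−1})(x_{i+1} − x_{i−1}))`. -/
noncomputable def alphaC (x : ℕ → ℝ) (s : ℝ) (i : ℕ) : ℝ :=
  s ^ 2 * (x i) ^ 2 / ((x i - x (i - 1)) * (x (i + 1) - x (i - 1)))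

/-- `β_i(σ) = σ²x_i²/((x_{i+1} − x_i)(x_{i+1} − x_{i−1}))`. -/
noncomputable def betaC (x : ℕ → ℝ) (s : ℝ) (i : ℕ) : ℝ :=
  s ^ 2 * (x i) ^ 2 / ((x (i + 1) - x i) * (x (i + 1) - x (i - 1)))

/-- The nodal discrete operator
`G_i(u₋, u₀, u₊, ū) = (u₀ − ū)/Δt − max_{σ∈{σ̲,σ̄}} [α_i(σ)u₋ + β_i(σ)u₊ − (α_i(σ)+β_i(σ)+r)u₀]`. -/
noncomputable def Gnode (x : ℕ → ℝ) (σlo σhi r Δt : ℝ) (i : ℕ)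
    (um u0 up ub : ℝ) : ℝ :=
  (u0 - ub) / Δt -
    max (alphaC x σlo i * um + betaC x σlo i * up - (alphaC x σlo i + betaC x σlo i + r) * u0)
        (alphaC x σhi i * um + betaC x σhi i * up - (alphaC x σhi i + betaC x σhi i + r) * u0)

/-- The discrete Black–Scholes operator with constant volatility `s` at the node `x_i`, i.e. the
bracket whose maximum over the two extreme volatilities enters `G_i`. The drift `-rx∂_x` does not
appear: the characteristic discretization absorbs it into `ū`. -/
noncomputable def bsNode (x : ℕ → ℝ) (s r : ℝ) (i : ℕ) (um u0 up : ℝ) : ℝ :=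
  alphaC x s i * um + betaC x s i * up - (alphaC x s i + betaC x s i + r) * u0

lemma Gnode_eq_sub_max_bsNode (x : ℕ → ℝ) (σlo σhi r Δt : ℝ) (i : ℕ) (um u0 up ub : ℝ) :
    Gnode x σlo σhi r Δt i um u0 up ub =
      (u0 - ub) / Δt - max (bsNode x σlo r i um u0 up) (bsNode x σhi r i um u0 up) :=
  rfl

lemma Gnode_add_ub (x : ℕ → ℝ) (σlo σhi r Δt : ℝ) (i : ℕ) (um u0 up ub ε : ℝ) :
    Gnode x σlo σhi r Δt i um u0 up (ub + ε) = Gnode x σlo σhi r Δt i um u0 up ub - ε / Δt := by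
  rw [Gnode_eq_sub_max_bsNode, Gnode_eq_sub_max_bsNode]
  ring

section IncreasingGrid

variable {x : ℕ → ℝ} {i : ℕ} {um um' up up' : ℝ}

lemma alphaC_nonneg (hleft : x (i - 1) ≤ x i) (hright : x i ≤ x (i + 1)) (s : ℝ) :
    0 ≤ alphaC x s i :=
  div_nonneg (by positivity)
    (mul_nonneg (sub_nonneg.2 hleft) (sub_nonneg.2 (hleft.trans hright)))

lemma betaC_nonneg (hleft : x (i - 1) ≤ x i) (hright : x i ≤ x (i + 1)) (s : ℝ) :
    0 ≤ betaC x s i :=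
  div_nonneg (by positivity)
    (mul_nonneg (sub_nonneg.2 hright) (sub_nonneg.2 (hleft.trans hright)))

lemma bsNode_le_bsNode (hleft : x (i - 1) ≤ x i) (hright : x i ≤ x (i + 1)) (s r u0 : ℝ)
    (hum : um ≤ um') (hup : up ≤ up') : bsNode x s r i um u0 up ≤ bsNode x s r i um' u0 up' :=
  sub_le_sub_right
    (add_le_add (mul_le_mul_of_nonneg_left hum (alphaC_nonneg hleft hright s))
      (mul_le_mul_of_nonneg_left hup (betaC_nonneg hleft hright s))) _

lemma Gnode_le_Gnode (hleft : x (i - 1) ≤ x i) (hright : x i ≤ x (i + 1)) (σlo σhi r Δt u0 ub : ℝ)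
    (hum : um ≤ um') (hup : up ≤ up') :
    Gnode x σlo σhi r Δt i um' u0 up' ub ≤ Gnode x σlo σhi r Δt i um u0 up ub := by
  rw [Gnode_eq_sub_max_bsNode, Gnode_eq_sub_max_bsNode]
  gcongr _ - max ?_ ?_
  · exact bsNode_le_bsNode hleft hright σlo r u0 hum hup
  · exact bsNode_le_bsNode hleft hright σhi r u0 hum hup

end IncreasingGrid

theorem monotonicity_discrete_operator_general {x : ℕ → ℝ} {i : ℕ}
    (hleft : x (i - 1) < x i) (hright : x i < x (i + 1))
    (σlo σhi r : ℝ) {Δt : ℝ} (hΔt : 0 < Δt) {ε : ℝ} (hε : 0 ≤ ε) (um u0 up ub : ℝ) :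
    Gnode x σlo σhi r Δt i (um + ε) u0 up ub ≤ Gnode x σlo σhi r Δt i um u0 up ub ∧
    Gnode x σlo σhi r Δt i um u0 (up + ε) ub ≤ Gnode x σlo σhi r Δt i um u0 up ub ∧
    Gnode x σlo σhi r Δt i um u0 up (ub + ε)
      = Gnode x σlo σhi r Δt i um u0 up ub - ε / Δt ∧
    Gnode x σlo σhi r Δt i um u0 up (ub + ε) ≤ Gnode x σlo σhi r Δt i um u0 up ub := by
  have hub := Gnode_add_ub x σlo σhi r Δt i um u0 up ub ε
  refine ⟨?_, ?_, hub, hub.trans_le (sub_le_self _ (div_nonneg hε hΔt.le))⟩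
  · exact Gnode_le_Gnode hleft.le hright.le σlo σhi r Δt u0 ub (le_add_of_nonneg_right hε) le_rfl
  · exact Gnode_le_Gnode hleft.le hright.le σlo σhi r Δt u0 ub le_rfl (le_add_of_nonneg_right hε)

/-- Monotonicity of the discrete operator `G_i`. -/
theorem monotonicity_discrete_operator
    (N : ℕ) (hN : 2 ≤ N) (x : ℕ → ℝ) (hx0 : x 0 = 0)
    (hxmono : ∀ i < N, x i < x (i + 1))
    (σlo σhi r Δt : ℝ) (hσlo : 0 ≤ σlo) (hσ : σlo < σhi) (hr : 0 ≤ r) (hΔt : 0 < Δt)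
    (i : ℕ) (hi1 : 1 ≤ i) (hi2 : i ≤ N - 1) :
    ∀ ε ≥ (0 : ℝ), ∀ um u0 up ub : ℝ,
      Gnode x σlo σhi r Δt i (um + ε) u0 up ub ≤ Gnode x σlo σhi r Δt i um u0 up ub ∧
      Gnode x σlo σhi r Δt i um u0 (up + ε) ub ≤ Gnode x σlo σhi r Δt i um u0 up ub ∧
      Gnode x σlo σhi r Δt i um u0 up (ub + ε)
        = Gnode x σlo σhi r Δt i um u0 up ub - ε / Δt ∧
      Gnode x σlo σhi r Δt i um u0 up (ub + ε) ≤ Gnode x σlo σhi r Δt i um u0 up ub := by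
  have hleft : x (i - 1) < x i := by
    simpa only [Nat.sub_add_cancel hi1] using hxmono (i - 1) (by lia)
  exact fun ε hε =>
    monotonicity_discrete_operator_general hleft (hxmono i (by lia)) σlo σhi r hΔt hε
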